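/- Let H be a graph with q edges and let s = kq. Let F ⊆ binom([n],k) and let L be the kernel graph of F with threshold s. If H is a subgraph of L, then F contains a copy of the k-blowup H^{(k)} whose skeleton is H; that is, there exist members E_e ∈ F, one for each edge e = xy of H, such that E_e contains x and y and the sets E_e ∖ {x,y} over all edges e are pairwise disjoint and disjoint from the vertex set of H. -/

import Mathlib

open Finset

/-- The finsets in `S` form an s-star (Δ-system) in `G` with kernel `A`:
`S` consists of `s` members of `G` whose pairwise intersections all equal `A`. -/
def IsStarWithKernel {α : Type*} [DecidableEq α] (G : Finset (Finset α)) (s : ℕ)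
    (A : Finset α) (S : Finset (Finset α)) : Prop :=
  S ⊆ G ∧ S.card = s ∧ ∀ E₁ ∈ S, ∀ E₂ ∈ S, E₁ ≠ E₂ → E₁ ∩ E₂ = A

/-!
Start with the vertex pairs of the edges of `H` and replace them one at a time by members of `F`,
keeping the invariant that two sets meet only where their edges meet. When the set of `e` is to be
replaced, the other `q - 1` sets cover at most `k (q - 1)` vertices. The petals of a star with
kernel `e` are disjoint outside `e`, so one of more than `k (q - 1)` petals meets this cover only
inside `e`.
-/

namespace IsStarWithKernel

variable {α : Type*} [DecidableEq α] {G S : Finset (Finset α)} {s : ℕ} {A B E : Finset α}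

theorem kernel_subset (hS : IsStarWithKernel G s A S) (hs : 2 ≤ s) (hE : E ∈ S) : A ⊆ E := by
  obtain ⟨-, hcard, hinter⟩ := hS
  obtain ⟨E', hE', hne⟩ := exists_mem_ne (by omega : 1 < #S) E
  rw [← hinter E hE E' hE' hne.symm]
  exact inter_subset_left

theorem exists_inter_subset_kernel (hS : IsStarWithKernel G s A S) (hB : #B < s) :
    ∃ E ∈ S, E ∩ B ⊆ A := by
  obtain ⟨-, rfl, hinter⟩ := hS
  by_contra! hmeets
  refine hB.not_ge (card_le_card_of_forall_subsingleton (fun E v ↦ v ∈ E ∧ v ∉ A) ?_ ?_)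
  · intro E hE
    obtain ⟨v, hv, hvA⟩ := not_subset.mp (hmeets E hE)
    exact ⟨v, mem_of_mem_inter_right hv, mem_of_mem_inter_left hv, hvA⟩
  · rintro v - E₁ ⟨hE₁, hv₁, hvA⟩ E₂ ⟨hE₂, hv₂, -⟩
    by_contra hne
    exact hvA (hinter E₁ hE₁ E₂ hE₂ hne ▸ mem_inter_of_mem hv₁ hv₂)

end IsStarWithKernel

/-- The sets `X i`, `i ∈ T`, form a blowup of the hypergraph with edges `A i`: each `X i` is `A i`
together with new vertices, which lie in no other `X j`. Since `A j ⊆ X j`, the new vertices then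
also avoid every `A j`. No uniformity is imposed on the sizes of the `X i`. -/
structure IsBlowup {ι α : Type*} [DecidableEq α] (T : Finset ι) (A X : ι → Finset α) : Prop where
  subset : ∀ i ∈ T, A i ⊆ X i
  inter_subset : ∀ i ∈ T, ∀ j ∈ T, i ≠ j → X i ∩ X j ⊆ A i ∩ A j

namespace IsBlowup

variable {ι α : Type*} [DecidableEq α] {T : Finset ι} {A X : ι → Finset α}

theorem refl (T : Finset ι) (A : ι → Finset α) : IsBlowup T A A :=
  ⟨fun _ _ ↦ Subset.rfl, fun _ _ _ _ _ ↦ Subset.rfl⟩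

theorem mem_base_of_mem (hX : IsBlowup T A X) {i j : ι} (hi : i ∈ T) (hj : j ∈ T) {v : α}
    (hvi : v ∈ X i) (hvj : v ∈ A j) : v ∈ A i := by
  obtain rfl | hij := eq_or_ne i j
  · exact hvj
  · exact mem_of_mem_inter_left
      (hX.inter_subset i hi j hj hij (mem_inter_of_mem hvi (hX.subset j hj hvj)))

theorem update [DecidableEq ι] (hX : IsBlowup T A X) {i : ι} {Y : Finset α} (hAY : A i ⊆ Y)
    (hY : Y ∩ (T.erase i).biUnion X ⊆ A i) : IsBlowup T A (Function.update X i Y) := by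
  have inter_new : i ∈ T → ∀ j ∈ T, j ≠ i → Y ∩ X j ⊆ A i ∩ A j := by
    intro hi j hj hji v hv
    obtain ⟨hvY, hvj⟩ := mem_inter.mp hv
    have hvi : v ∈ A i :=
      hY (mem_inter_of_mem hvY (mem_biUnion.mpr ⟨j, mem_erase.mpr ⟨hji, hj⟩, hvj⟩))
    exact mem_inter_of_mem hvi (hX.mem_base_of_mem hj hi hvj hvi)
  refine ⟨fun j hj ↦ ?_, fun j hj l hl hjl ↦ ?_⟩
  · obtain rfl | hji := eq_or_ne j i
    · rwa [Function.update_self]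
    · rw [Function.update_of_ne hji]
      exact hX.subset j hj
  · obtain rfl | hji := eq_or_ne j i
    · rw [Function.update_self, Function.update_of_ne hjl.symm]
      exact inter_new hj l hl hjl.symm
    obtain rfl | hli := eq_or_ne l i
    · rw [Function.update_self, Function.update_of_ne hji, inter_comm, inter_comm (A j)]
      exact inter_new hl j hj hji
    · rw [Function.update_of_ne hji, Function.update_of_ne hli]
      exact hX.inter_subset j hj l hl hjl

end IsBlowup

section Stars

variable {ι α : Type*} [DecidableEq α] {F : Finset (Finset α)} {T : Finset ι}
  {A X : ι → Finset α} {k s : ℕ}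

theorem IsBlowup.exists_update_of_isStarWithKernel [DecidableEq ι] (hX : IsBlowup T A X)
    (hXk : ∀ j ∈ T, #(X j) ≤ k) (hs : 2 ≤ s) (hks : k * (#T - 1) < s) {i : ι} (hi : i ∈ T)
    {S : Finset (Finset α)} (hS : IsStarWithKernel F s (A i) S) :
    ∃ Y ∈ F, IsBlowup T A (Function.update X i Y) := by
  have cover_card : #((T.erase i).biUnion X) < s :=
    calc #((T.erase i).biUnion X) ≤ #(T.erase i) * k :=
          card_biUnion_le_card_mul _ _ _ fun j hj ↦ hXk j (mem_of_mem_erase hj)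
      _ = k * (#T - 1) := by rw [card_erase_of_mem hi, mul_comm]
      _ < s := hks
  obtain ⟨Y, hYS, hY⟩ := hS.exists_inter_subset_kernel cover_card
  exact ⟨Y, hS.1 hYS, hX.update (hS.kernel_subset hs hYS) hY⟩

theorem exists_isBlowup_of_isStarWithKernel (hF : ∀ E ∈ F, #E ≤ k) (hs : 2 ≤ s)
    (hks : k * (#T - 1) < s) (hA : ∀ i ∈ T, ∃ S, IsStarWithKernel F s (A i) S) :
    ∃ X : ι → Finset α, (∀ i ∈ T, X i ∈ F) ∧ IsBlowup T A X := by
  classical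
  have kernel_card : ∀ i ∈ T, #(A i) ≤ k := by
    intro i hi
    obtain ⟨S, hS⟩ := hA i hi
    obtain ⟨E, hE⟩ := card_pos.mp (by have := hS.2.1; omega : 0 < #S)
    exact (card_le_card (hS.kernel_subset hs hE)).trans (hF E (hS.1 hE))
  have replace_on : ∀ R ⊆ T, ∃ X : ι → Finset α,
      (∀ i ∈ R, X i ∈ F) ∧ (∀ i ∈ T, #(X i) ≤ k) ∧ IsBlowup T A X := by
    intro R
    induction R using Finset.induction_on with
    | empty => exact fun _ ↦ ⟨A, by simp, kernel_card, .refl T A⟩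
    | insert i R _ ih =>
      intro hR
      obtain ⟨hi, hRT⟩ := insert_subset_iff.mp hR
      obtain ⟨X, hXF, hXk, hX⟩ := ih hRT
      obtain ⟨S, hS⟩ := hA i hi
      obtain ⟨Y, hYF, hY⟩ := hX.exists_update_of_isStarWithKernel hXk hs hks hi hS
      refine ⟨Function.update X i Y, fun j hj ↦ ?_, fun j hj ↦ ?_, hY⟩ <;>
        obtain rfl | hji := eq_or_ne j i
      · rwa [Function.update_self]
      · rw [Function.update_of_ne hji]
        exact hXF j (mem_of_mem_insert_of_ne hj hji)
      · rw [Function.update_self]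
        exact hF Y hYF
      · rw [Function.update_of_ne hji]
        exact hXk j hj
  obtain ⟨X, hXF, -, hX⟩ := replace_on T Subset.rfl
  exact ⟨X, hXF, hX⟩

end Stars

theorem kernel_graph_blowup_general {V : Type*} [DecidableEq V] {k s : ℕ}
    {F : Finset (Finset V)} (hF : ∀ A ∈ F, #A ≤ k) (H : SimpleGraph V) [Fintype H.edgeSet]
    (hs : 2 ≤ s) (hks : k * (#H.edgeFinset - 1) < s)
    (hHL : ∀ x y : V, H.Adj x y → ∃ S, IsStarWithKernel F s {x, y} S) :
    ∃ E : Sym2 V → Finset V,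
      (∀ e ∈ H.edgeSet, E e ∈ F ∧ ∀ a : V, a ∈ e → a ∈ E e) ∧
      (∀ e ∈ H.edgeSet, ∀ v ∈ E e, v ∈ H.support → v ∈ e) ∧
      (∀ e ∈ H.edgeSet, ∀ e' ∈ H.edgeSet, e ≠ e' →
        ∀ v : V, v ∈ E e → v ∈ E e' → v ∈ e ∧ v ∈ e') := by
  have edge_star : ∀ e ∈ H.edgeFinset, ∃ S, IsStarWithKernel F s e.toFinset S := by
    intro e he
    induction e using Sym2.ind with
    | _ x y => simpa only [Sym2.toFinset_mk_eq] using hHL x y (H.mem_edgeFinset.mp he)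
  obtain ⟨E, hEF, hE⟩ := exists_isBlowup_of_isStarWithKernel hF hs hks edge_star
  simp only [SimpleGraph.mem_edgeFinset] at hEF
  refine ⟨E, fun e he ↦ ⟨hEF e he, fun a ha ↦ ?_⟩, fun e he v hv ⟨w, hvw⟩ ↦ ?_,
    fun e he e' he' hne v hv hv' ↦ ?_⟩
  · exact hE.subset e (H.mem_edgeFinset.mpr he) (Sym2.mem_toFinset.mpr ha)
  · exact Sym2.mem_toFinset.mp <| hE.mem_base_of_mem (H.mem_edgeFinset.mpr he)
      (H.mem_edgeFinset.mpr hvw) hv (Sym2.mem_toFinset.mpr (Sym2.mem_mk_left v w))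
  · simpa only [mem_inter, Sym2.mem_toFinset] using hE.inter_subset e (H.mem_edgeFinset.mpr he)
      e' (H.mem_edgeFinset.mpr he') hne (mem_inter_of_mem hv hv')

/-- Lemma 4.2: let H be a graph with q edges that is a subgraph of the kernel graph of F
with threshold s = kq (every edge {x,y} of H is the kernel of some s-star in F). Then F
contains a copy of the k-blowup of H whose skeleton is H: for each edge e of H there is
a member E e of F containing both endpoints of e, whose remaining vertices avoid the
vertex set of H, and the sets of remaining vertices for distinct edges are disjoint. -/
theorem kernel_graph_blowup (k q n : ℕ) (hk : 2 ≤ k) (hq : 1 ≤ q)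
    (F : Finset (Finset (Fin n))) (hF : ∀ A ∈ F, A.card = k)
    (H : SimpleGraph (Fin n)) [DecidableRel H.Adj] (hHq : H.edgeFinset.card = q)
    (hHL : ∀ x y : Fin n, H.Adj x y →
      ∃ S : Finset (Finset (Fin n)), IsStarWithKernel F (k * q) {x, y} S) :
    ∃ E : Sym2 (Fin n) → Finset (Fin n),
      (∀ e ∈ H.edgeSet, E e ∈ F ∧ ∀ a : Fin n, a ∈ e → a ∈ E e) ∧
      (∀ e ∈ H.edgeSet, ∀ v ∈ E e, v ∈ H.support → v ∈ e) ∧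
      (∀ e ∈ H.edgeSet, ∀ e' ∈ H.edgeSet, e ≠ e' →
        ∀ v : Fin n, v ∈ E e → v ∈ E e' → v ∈ e ∧ v ∈ e') := by
  subst hHq
  exact kernel_graph_blowup_general (fun A hA ↦ (hF A hA).le) H (by nlinarith)
    (Nat.mul_lt_mul_of_pos_left (by omega) (by omega)) hHL
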